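/- Let H be a real Hilbert space, w̄ ∈ H, ε > 0, θ ∈ [0, 1) and φ̲ > 0. Let {xₙ}, {wₙ}, {zₙ} be sequences in H and {θₙ}, {φₙ} real sequences with θ₁ = 0, 0 ≤ θₙ ≤ θₙ₊₁ ≤ θ < 1 and φ̲ ≤ φₙ ≤ 1, satisfying: wₙ = xₙ + θₙ(xₙ − xₙ₋₁), xₙ₊₁ = (1 − φₙ)wₙ + φₙzₙ, ‖zₙ − w̄‖ ≤ ‖wₙ − w̄‖ for all n, and the inertial condition of Assumption 3.2 (one of: (i) φₙ, φₙ₊₁ ∈ (0, 1/2), φₙ⁻¹ − φₙ₊₁⁻¹ + 3 > 0 and θₙ₊₁ ≤ βₙ := (1/(2(φₙ₊₁⁻¹ − 2)))(φₙ⁻¹ + φₙ₊₁⁻¹ − 1 − Δₙ), Δₙ := √((φₙ⁻¹ + φₙ₊₁⁻¹ − 1)² − 4(φₙ⁻¹ − 1 − ε)(φₙ₊₁⁻¹ − 2)); (ii) φₙ = φₙ₊₁ = 1/2 and θₙ₊₁ ≤ (1 − ε)/3; (iii) φₙ, φₙ₊₁ ∈ (1/2, 1 − ε] and θₙ₊₁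 ≤ √(pₙ² + qₙ) − pₙ, pₙ := (φₙ⁻¹ + φₙ₊₁⁻¹ − 1)/(2(2 − φₙ₊₁⁻¹)), qₙ := (φₙ⁻¹ − 1 − ε)/(2 − φₙ₊₁⁻¹)). Then Σₙ₌₁^∞ ‖xₙ₊₁ − xₙ‖² < ∞, the limit limₙ→∞ ‖xₙ − w̄‖ exists, and {xₙ} is bounded. -/

import Mathlib

open Filter Topology

/-- Assumption 3.2 of the paper on the inertial factor `θ` and the relaxation
parameter `φ`, at index `n` (one of cases (i), (ii), (iii)). -/
def Assumption32 (ε : ℝ) (θ φ : ℕ → ℝ) (n : ℕ) : Prop :=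
  (φ n ∈ Set.Ioo (0:ℝ) (1/2) ∧ φ (n+1) ∈ Set.Ioo (0:ℝ) (1/2) ∧
    0 < (φ n)⁻¹ - (φ (n+1))⁻¹ + 3 ∧
    θ (n+1) ≤ (1/(2*((φ (n+1))⁻¹ - 2))) * ((φ n)⁻¹ + (φ (n+1))⁻¹ - 1 -
      Real.sqrt (((φ n)⁻¹ + (φ (n+1))⁻¹ - 1)^2
        - 4*((φ n)⁻¹ - 1 - ε)*((φ (n+1))⁻¹ - 2)))) ∨
  (φ n = 1/2 ∧ φ (n+1) = 1/2 ∧ θ (n+1) ≤ (1 - ε)/3) ∨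
  (φ n ∈ Set.Ioc (1/2 : ℝ) (1 - ε) ∧ φ (n+1) ∈ Set.Ioc (1/2 : ℝ) (1 - ε) ∧
    θ (n+1) ≤ Real.sqrt ((((φ n)⁻¹ + (φ (n+1))⁻¹ - 1)/(2*(2 - (φ (n+1))⁻¹)))^2
        + ((φ n)⁻¹ - 1 - ε)/(2 - (φ (n+1))⁻¹))
      - ((φ n)⁻¹ + (φ (n+1))⁻¹ - 1)/(2*(2 - (φ (n+1))⁻¹)))

theorem quad_aux {ε : ℝ} {θ φ : ℕ → ℝ} {n : ℕ} (hε : 0 < ε) (hp : 0 ≤ θ (n+1))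
    (h : Assumption32 ε θ φ n) :
    0 ≤ ((φ (n+1))⁻¹ - 2) * (θ (n+1))^2 - ((φ n)⁻¹ + (φ (n+1))⁻¹ - 1) * θ (n+1)
      + ((φ n)⁻¹ - 1 - ε) := by
  rcases h with ⟨h1, h2, _, h4⟩ | ⟨h1, h2, h3⟩ | ⟨h1, h2, h3⟩
  · have hA : 0 < (φ (n+1))⁻¹ - 2 := by
      have := (lt_inv_comm₀ (by norm_num : (0:ℝ) < 2) h2.1).2 (by simpa using h2.2)
      linarith
    generalize (φ (n+1))⁻¹ - 2 = A at *
    generalize (φ n)⁻¹ + (φ (n+1))⁻¹ - 1 = B at *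
    generalize (φ n)⁻¹ - 1 - ε = C at *
    generalize θ (n+1) = t at *
    have h5 : 2 * A * t ≤ B - Real.sqrt (B^2 - 4*C*A) := by
      calc 2 * A * t ≤ 2 * A * (1/(2*A) * (B - Real.sqrt (B^2 - 4*C*A))) := by gcongr
        _ = _ := by field_simp
    have h6 : 0 ≤ 4 * A * (A * t^2 - B * t + C) := by
      rcases le_total 0 (B^2 - 4*C*A) with hD | hD
      · have h7 : (Real.sqrt (B^2 - 4*C*A))^2 ≤ (B - 2*A*t)^2 :=
          pow_le_pow_left₀ (Real.sqrt_nonneg _) (by linarith) 2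
        rw [Real.sq_sqrt hD] at h7
        nlinarith
      · nlinarith [sq_nonneg (B - 2*A*t)]
    exact nonneg_of_mul_nonneg_right h6 (by linarith)
  · rw [h1, h2]; norm_num; linarith
  · have h10 : 0 < φ n := by linarith [h1.1]
    have h20 : 0 < φ (n+1) := by linarith [h2.1]
    have hA : 0 < 2 - (φ (n+1))⁻¹ := by
      have := (inv_lt_comm₀ h20 (by norm_num : (0:ℝ) < 2)).2 (by simpa using h2.1)
      linarith
    have hB : 0 < (φ n)⁻¹ + (φ (n+1))⁻¹ - 1 := by
      have := (one_le_inv₀ h10).2 (by linarith [h1.2])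
      have := (one_le_inv₀ h20).2 (by linarith [h2.2])
      linarith
    rw [show (φ (n+1))⁻¹ - 2 = -(2 - (φ (n+1))⁻¹) by ring]
    generalize 2 - (φ (n+1))⁻¹ = A at *
    generalize (φ n)⁻¹ + (φ (n+1))⁻¹ - 1 = B at *
    generalize (φ n)⁻¹ - 1 - ε = C at *
    generalize θ (n+1) = t at *
    have hp0 : 0 < B / (2*A) := by positivity
    have h4 : 0 < Real.sqrt ((B/(2*A))^2 + C/A) := by linarith
    have h5 := Real.sqrt_pos.1 h4
    have h7 : (t + B/(2*A))^2 ≤ (Real.sqrt ((B/(2*A))^2 + C/A))^2 :=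
      pow_le_pow_left₀ (by linarith) (by linarith) 2
    rw [Real.sq_sqrt h5.le] at h7
    have h8 : t^2 + B/A*t ≤ C/A := by
      have : B/A = 2*(B/(2*A)) := by field_simp
      rw [this]; nlinarith
    have h9 : A * (t^2 + B/A*t) ≤ A * (C/A) := by gcongr
    have e1 : A * (t^2 + B/A*t) = A*t^2 + B*t := by field_simp
    have e2 : A * (C/A) = C := by field_simp
    linarith

theorem real_aux (a d t σ r : ℕ → ℝ) (ε θb S : ℝ) (hε : 0 < ε) (hθ1 : θb < 1)
    (ha : ∀ n, 0 ≤ a n) (hd : ∀ n, 0 ≤ d n) (ht0 : ∀ n, 0 ≤ t n)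
    (ht : ∀ n, t n ≤ t (n+1)) (htb : ∀ n, t n ≤ θb)
    (hσ0 : ∀ n, 0 ≤ σ n) (hσ : ∀ n, σ n ≤ S) (hr0 : ∀ n, 0 ≤ r n)
    (hr : ∀ n, σ (n+1) + ε ≤ r n)
    (h : ∀ n, a (n+2) ≤ (1 + t n) * a (n+1) - t n * a n + σ n * d n - r n * d (n+1)) :
    Summable d ∧ ∃ l, Tendsto a atTop (𝓝 l) := by
  have hθ0 : 0 ≤ θb := (ht0 0).trans (htb 0)
  set Γ : ℕ → ℝ := fun n => a (n+1) - t n * a n + σ n * d n with hΓ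
  have hstep : ∀ n, Γ (n+1) ≤ Γ n - ε * d (n+1) := by
    intro n
    simp only [hΓ]
    nlinarith [h n, mul_le_mul_of_nonneg_right (hr n) (hd (n+1)),
      mul_le_mul_of_nonneg_right (ht n) (ha (n+1))]
  have hsum : ∀ n, Γ n + ε * ∑ i ∈ Finset.range n, d (i+1) ≤ Γ 0 := by
    intro n
    induction n with
    | zero => simp
    | succ k ih => rw [Finset.sum_range_succ]; linarith [hstep k]
  have hS0 : ∀ n, 0 ≤ ∑ i ∈ Finset.range n, d (i+1) :=
    fun n => Finset.sum_nonneg fun i _ => hd _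
  have hΓl : ∀ n, a (n+1) - θb * a n ≤ Γ n := by
    intro n
    simp only [hΓ]
    nlinarith [mul_le_mul_of_nonneg_right (htb n) (ha n), mul_nonneg (hσ0 n) (hd n)]
  obtain ⟨M, hM⟩ : ∃ M, ∀ n, a n ≤ M := by
    refine ⟨max (a 0) (Γ 0 / (1 - θb)), fun n => ?_⟩
    induction n with
    | zero => exact le_max_left _ _
    | succ k ih =>
      set m := max (a 0) (Γ 0 / (1 - θb))
      have h1 : Γ 0 ≤ m * (1 - θb) := (div_le_iff₀ (by linarith)).1 (le_max_right _ _)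
      have h2 := hsum k
      have h3 := mul_nonneg hε.le (hS0 k)
      nlinarith [hΓl k, mul_le_mul_of_nonneg_left ih hθ0]
  have hds : Summable d := by
    rw [← summable_nat_add_iff 1]
    refine summable_of_sum_range_le (c := (Γ 0 + θb * M) / ε) (fun n => hd _) fun n => ?_
    rw [le_div_iff₀ hε]
    nlinarith [hsum n, hΓl n, ha (n+1), mul_le_mul_of_nonneg_left (hM n) hθ0]
  refine ⟨hds, ?_⟩
  have hδs : Summable fun n => σ n * d n :=
    Summable.of_nonneg_of_le (fun n => mul_nonneg (hσ0 n) (hd n))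
      (fun n => mul_le_mul_of_nonneg_right (hσ n) (hd n)) (hds.mul_left S)
  set u : ℕ → ℝ := fun n => max (a (n+1) - a n) 0 with hu
  have hu0 : ∀ n, 0 ≤ u n := fun n => le_max_right _ _
  have hu1 : ∀ n, a (n+1) - a n ≤ u n := fun n => le_max_left _ _
  have hδ0 : ∀ n, 0 ≤ σ n * d n := fun n => mul_nonneg (hσ0 n) (hd n)
  have hus : ∀ n, u (n+1) ≤ θb * u n + σ n * d n := by
    intro n
    refine max_le ?_ (add_nonneg (mul_nonneg hθ0 (hu0 n)) (hδ0 n))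
    have h1 := mul_le_mul_of_nonneg_left (hu1 n) (ht0 n)
    have h2 := mul_le_mul_of_nonneg_right (htb n) (hu0 n)
    have h3 := mul_nonneg (hr0 n) (hd (n+1))
    have h4 := h n
    show a (n+2) - a (n+1) ≤ _
    linarith
  have husum : Summable u := by
    refine summable_of_sum_range_le (c := (u 0 + ∑' n, σ n * d n) / (1 - θb)) hu0 fun n => ?_
    rw [le_div_iff₀ (by linarith)]
    have h1 : ∑ i ∈ Finset.range n, u (i+1) ≤
        θb * ∑ i ∈ Finset.range n, u i + ∑ i ∈ Finset.range n, σ i * d i := by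
      rw [Finset.mul_sum, ← Finset.sum_add_distrib]
      exact Finset.sum_le_sum fun i _ => hus i
    have h2 := hδs.sum_le_tsum (Finset.range n) (fun i _ => hδ0 i)
    have h3 := Finset.sum_range_succ' u n
    have h4 := Finset.sum_range_succ u n
    have h5 := hu0 n
    linarith
  have hanti : Antitone fun n => a n - ∑ i ∈ Finset.range n, u i := by
    refine antitone_nat_of_succ_le fun n => ?_
    rw [Finset.sum_range_succ]
    linarith [hu1 n]
  have hbdd : BddBelow (Set.range fun n => a n - ∑ i ∈ Finset.range n, u i) := by
    refine ⟨-∑' n, u n, ?_⟩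
    rintro _ ⟨n, rfl⟩
    have := husum.sum_le_tsum (Finset.range n) (fun i _ => hu0 i)
    have := ha n
    simp only
    linarith
  have hlim := (tendsto_atTop_ciInf hanti hbdd).add husum.hasSum.tendsto_sum_nat
  exact ⟨_, by simpa using hlim⟩

theorem step_aux {H : Type*} [NormedAddCommGroup H] [InnerProductSpace ℝ H]
    (p x0 x1 x2 w z : H) (t f : ℝ) (ht0 : 0 ≤ t) (hf : 0 < f) (hf1 : f ≤ 1)
    (hw : w = x1 + t • (x1 - x0)) (hx : x2 = (1 - f) • w + f • z)
    (hz : ‖z - p‖ ≤ ‖w - p‖) :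
    ‖x2 - p‖^2 ≤ (1 + t) * ‖x1 - p‖^2 - t * ‖x0 - p‖^2
      + (t * (1 + t) + (f⁻¹ - 1) * (t * (1 - t))) * ‖x1 - x0‖^2
      - ((f⁻¹ - 1) * (1 - t)) * ‖x2 - x1‖^2 := by
  have hρ : 0 ≤ f⁻¹ - 1 := by linarith [(one_le_inv₀ hf).2 hf1]
  have hz2 : ‖z - p‖^2 ≤ ‖w - p‖^2 := pow_le_pow_left₀ (norm_nonneg _) hz 2
  have e1 : ‖x2 - p‖^2 = (1 - f) * ‖w - p‖^2 + f * ‖z - p‖^2 - f * (1 - f) * ‖z - w‖^2 := by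
    have h1 : x2 - p = (1 - f) • (w - p) + f • (z - p) := by rw [hx]; module
    have h2 : z - w = (z - p) - (w - p) := by abel
    rw [h1, h2]
    generalize w - p = a
    generalize z - p = b
    rw [norm_add_sq_real, norm_sub_sq_real, norm_smul, norm_smul, inner_smul_left,
      inner_smul_right, mul_pow, mul_pow, Real.norm_eq_abs, Real.norm_eq_abs, sq_abs, sq_abs,
      real_inner_comm]
    simp only [conj_trivial]
    ring
  have e2 : ‖x2 - w‖^2 = f^2 * ‖z - w‖^2 := by
    have h1 : x2 - w = f • (z - w) := by rw [hx]; module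
    rw [h1, norm_smul, mul_pow, Real.norm_eq_abs, sq_abs]
  have e3 : ‖x2 - p‖^2 ≤ ‖w - p‖^2 - (f⁻¹ - 1) * ‖x2 - w‖^2 := by
    have : (f⁻¹ - 1) * (f^2 * ‖z - w‖^2) = f * (1 - f) * ‖z - w‖^2 := by field_simp
    rw [e2, this, e1]
    nlinarith [mul_le_mul_of_nonneg_left hz2 hf.le]
  have e4 : ‖w - p‖^2 = (1 + t) * ‖x1 - p‖^2 - t * ‖x0 - p‖^2 + t * (1 + t) * ‖x1 - x0‖^2 := by
    have h1 : w - p = (x1 - p) + t • (x1 - x0) := by rw [hw]; module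
    have h2 : x0 - p = (x1 - p) - (x1 - x0) := by abel
    rw [h1, h2]
    generalize x1 - p = a
    generalize x1 - x0 = b
    rw [norm_add_sq_real, norm_sub_sq_real, norm_smul,
      inner_smul_right, mul_pow, Real.norm_eq_abs, sq_abs]
    ring
  have e5 : (1 - t) * ‖x2 - x1‖^2 - t * (1 - t) * ‖x1 - x0‖^2 ≤ ‖x2 - w‖^2 := by
    have h1 : x2 - w = (x2 - x1) - t • (x1 - x0) := by rw [hw]; module
    rw [h1]
    generalize x2 - x1 = a
    generalize x1 - x0 = b
    have h3 : 0 ≤ ‖a - b‖^2 := by positivity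
    rw [norm_sub_sq_real] at h3
    rw [norm_sub_sq_real, norm_smul,
      inner_smul_right, mul_pow, Real.norm_eq_abs, sq_abs]
    nlinarith [mul_nonneg ht0 h3]
  have e6 := mul_le_mul_of_nonneg_left e5 hρ
  rw [e4] at e3
  linarith

theorem stmt10 {H : Type*} [NormedAddCommGroup H] [InnerProductSpace ℝ H]
    [CompleteSpace H]
    (wbar : H) (ε θbar φlow : ℝ) (hε : 0 < ε)
    (hθbar0 : 0 ≤ θbar) (hθbar1 : θbar < 1) (hφlow : 0 < φlow)
    (x w z : ℕ → H) (θ φ : ℕ → ℝ)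
    (hθ1 : θ 1 = 0) (hθ0 : ∀ n ≥ 1, 0 ≤ θ n)
    (hθmono : ∀ n ≥ 1, θ n ≤ θ (n+1)) (hθb : ∀ n ≥ 1, θ n ≤ θbar)
    (hφ : ∀ n ≥ 1, φlow ≤ φ n ∧ φ n ≤ 1)
    (h32 : ∀ n ≥ 1, Assumption32 ε θ φ n)
    (hw : ∀ n ≥ 1, w n = x n + θ n • (x n - x (n-1)))
    (hx : ∀ n ≥ 1, x (n+1) = (1 - φ n) • w n + φ n • z n)
    (hz : ∀ n ≥ 1, ‖z n - wbar‖ ≤ ‖w n - wbar‖) :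
    Summable (fun n => ‖x (n+1) - x n‖^2) ∧
    (∃ l : ℝ, Tendsto (fun n => ‖x n - wbar‖) atTop (𝓝 l)) ∧
    (∃ M : ℝ, ∀ n, ‖x n‖ ≤ M) := by
  have hf0 : ∀ n, 0 < φ (n+1) := fun n => hφlow.trans_le (hφ (n+1) (by omega)).1
  have hf1 : ∀ n, φ (n+1) ≤ 1 := fun n => (hφ (n+1) (by omega)).2
  have ht0 : ∀ n, 0 ≤ θ (n+1) := fun n => hθ0 (n+1) (by omega)
  have htb : ∀ n, θ (n+1) ≤ θbar := fun n => hθb (n+1) (by omega)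
  have htm : ∀ n, θ (n+1) ≤ θ (n+1+1) := fun n => hθmono (n+1) (by omega)
  have hρ : ∀ n, 0 ≤ (φ (n+1))⁻¹ - 1 := fun n => by
    linarith [(one_le_inv₀ (hf0 n)).2 (hf1 n)]
  have hρ2 : ∀ n, (φ (n+1))⁻¹ ≤ φlow⁻¹ := fun n =>
    inv_anti₀ hφlow (hφ (n+1) (by omega)).1
  have key := real_aux (fun n => ‖x n - wbar‖^2) (fun n => ‖x (n+1) - x n‖^2)
    (fun n => θ (n+1))
    (fun n => θ (n+1) * (1 + θ (n+1)) + ((φ (n+1))⁻¹ - 1) * (θ (n+1) * (1 - θ (n+1))))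
    (fun n => ((φ (n+1))⁻¹ - 1) * (1 - θ (n+1))) ε θbar (2 + φlow⁻¹) hε hθbar1
    (fun n => by positivity) (fun n => by positivity) ht0 htm htb
    (fun n => by
      have h1 := ht0 n
      have h2 := mul_nonneg (hρ n) (mul_nonneg (ht0 n)
        (by linarith [htb n] : 0 ≤ 1 - θ (n+1)))
      have h3 : 0 ≤ θ (n+1) * (1 + θ (n+1)) := by positivity
      exact add_nonneg h3 h2)
    (fun n => by
      have h1 := ht0 n
      have h2 : θ (n+1) ≤ 1 := by linarith [htb n]
      have h3 : θ (n+1) * (1 - θ (n+1)) ≤ 1 := by nlinarith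
      have h4 := mul_le_mul_of_nonneg_left h3 (hρ n)
      have h5 := hρ2 n
      have h6 : θ (n+1) * (1 + θ (n+1)) ≤ 2 := by nlinarith
      linarith)
    (fun n => mul_nonneg (hρ n) (by linarith [htb n]))
    (fun n => by
      have h1 := quad_aux hε (ht0 (n+1)) (h32 (n+1) (by omega))
      have h2 := mul_le_mul_of_nonneg_left (htm n) (hρ n)
      nlinarith)
    (fun n => step_aux wbar (x n) (x (n+1)) (x (n+2)) (w (n+1)) (z (n+1)) (θ (n+1)) (φ (n+1))
      (ht0 n) (hf0 n) (hf1 n) (hw (n+1) (by omega)) (hx (n+1) (by omega))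
      (hz (n+1) (by omega)))
  obtain ⟨hs, l, hl⟩ := key
  have hl2 : Tendsto (fun n => ‖x n - wbar‖) atTop (𝓝 (Real.sqrt l)) := by
    have := hl.sqrt
    simpa [Real.sqrt_sq (norm_nonneg _)] using this
  refine ⟨hs, ⟨_, hl2⟩, ?_⟩
  obtain ⟨M, hM⟩ := hl2.bddAbove_range
  refine ⟨M + ‖wbar‖, fun n => ?_⟩
  have h1 : ‖x n - wbar‖ ≤ M := hM ⟨n, rfl⟩
  have h2 := norm_add_le (x n - wbar) wbar
  rw [sub_add_cancel] at h2
  linarith
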